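/- arXiv:1905.13602 — 2 statements merged into one kernel-verified Lean document; each statement's English description precedes it below -/
import Mathlib

section
/- For all natural numbers m and n, −(1/(2π))·∫_{−1}^{1}∫_{−1}^{1} ln|x−y| · pₘ(x) · pₙ(y) dx dy equals (n+1)·π/4 if m = n, and equals 0 if m ≠ n, where pₙ(x) := d/dx[√(1−x²)·Uₙ(x)]. (This is the eigenvalue relation N_{0,ω}Uₙ = ((n+1)/2)·Uₙ for the weighted Laplace hypersingular operator, expressed through its defining variational double integral.) -/
open Real Set MeasureTheory intervalIntegral

/-- The `n`-th Chebyshev polynomial of the second kind, as a real function. -/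
noncomputable def chebU (n : ℕ) : ℝ → ℝ := fun x => (Polynomial.Chebyshev.U ℝ n).eval x

/-- `pₙ(x) = d/dx [√(1-x²) Uₙ(x)]`. -/
noncomputable def pCheb (n : ℕ) : ℝ → ℝ :=
  fun x => deriv (fun t => Real.sqrt (1 - t ^ 2) * chebU n t) x

open Polynomial.Chebyshev in
theorem pCheb_eq (n : ℕ) {x : ℝ} (hx : x ∈ Ioo (-1 : ℝ) 1) :
    pCheb n x = -((n : ℝ) + 1) * ((T ℝ (n + 1)).eval x * √(1 - x ^ 2)⁻¹) := by
  have hpos : 0 < 1 - x ^ 2 := by nlinarith [hx.1, hx.2]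
  have hs : 0 < √(1 - x ^ 2) := sqrt_pos.2 hpos
  have hss : √(1 - x ^ 2) ^ 2 = 1 - x ^ 2 := sq_sqrt hpos.le
  have h1 : HasDerivAt (fun t : ℝ => 1 - t ^ 2) (-(2 * x)) x := by
    simpa using (hasDerivAt_pow 2 x).const_sub 1
  have h2 := (h1.sqrt hpos.ne').mul ((U ℝ n).hasDerivAt x)
  have h3 := congrArg (Polynomial.eval x) (add_one_mul_T_eq_poly_in_U (R := ℝ) n)
  simp only [Polynomial.eval_mul, Polynomial.eval_add, Polynomial.eval_sub, Polynomial.eval_pow,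
    Polynomial.eval_X, Polynomial.eval_one, Int.cast_natCast,
    Polynomial.eval_natCast] at h3
  have h4 : pCheb n x = _ := h2.deriv
  rw [h4, sqrt_inv]
  field_simp
  rw [hss]
  linear_combination h3

/-- The mean of `U₂ₙ` over the half circle. -/
theorem integral_eval_U_even_cos (n : ℕ) :
    ∫ v in (0 : ℝ)..π, (Polynomial.Chebyshev.U ℝ (2 * n : ℕ)).eval (cos v) = π := by
  induction n with
  | zero => simp
  | succ k ih =>
    have hT := Polynomial.Chebyshev.integral_eval_T_real_measureT_of_ne_zero
      (n := (2 * k : ℕ) + 2) (by positivity)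
    rw [Polynomial.Chebyshev.integral_measureT_eq_integral_cos] at hT
    have h : ∀ v : ℝ, (Polynomial.Chebyshev.U ℝ (2 * (k + 1) : ℕ)).eval (cos v)
        = (Polynomial.Chebyshev.U ℝ (2 * k : ℕ)).eval (cos v)
          + 2 * (Polynomial.Chebyshev.T ℝ ((2 * k : ℕ) + 2)).eval (cos v) := by
      intro v
      have h1 := congrArg (Polynomial.eval (cos v))
        (Polynomial.Chebyshev.T_eq_U_sub_X_mul_U ℝ ((2 * k : ℕ) + 2))
      have h2 := congrArg (Polynomial.eval (cos v))
        (Polynomial.Chebyshev.U_add_two ℝ (2 * k : ℕ))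
      have e1 : ((2 * (k + 1) : ℕ) : ℤ) = (2 * k : ℕ) + 2 := by push_cast; ring
      have e2 : ((2 * k : ℕ) : ℤ) + 2 - 1 = (2 * k : ℕ) + 1 := by ring
      rw [e2] at h1
      rw [e1]
      simp only [Polynomial.eval_sub, Polynomial.eval_mul, Polynomial.eval_X,
        Polynomial.eval_ofNat] at h1 h2
      linarith
    simp_rw [h]
    rw [intervalIntegral.integral_add, ih, intervalIntegral.integral_const_mul, hT]
    · simp
    · exact Continuous.intervalIntegrable (by fun_prop) _ _
    · exact Continuous.intervalIntegrable (by fun_prop) _ _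

theorem integral_log_sin_mul_cos {N : ℕ} (hN : N ≠ 0) :
    ∫ v in (0 : ℝ)..π, log (sin v) * cos (2 * N * v) = -π / (2 * N) := by
  have hN0 : (N : ℝ) ≠ 0 := Nat.cast_ne_zero.2 hN
  set P := Polynomial.Chebyshev.U ℝ (2 * N - 1 : ℤ) with hP
  have hPsin : ∀ v : ℝ, P.eval (cos v) * sin v = sin (2 * N * v) := by
    intro v
    rw [hP, Polynomial.Chebyshev.U_real_cos]
    congr 1; push_cast; ring
  have hPcos : ∫ v in (0 : ℝ)..π, P.eval (cos v) * cos v = π := by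
    have hT := Polynomial.Chebyshev.integral_eval_T_real_measureT_of_ne_zero
      (n := (2 * N : ℕ)) (by positivity)
    rw [Polynomial.Chebyshev.integral_measureT_eq_integral_cos] at hT
    have h : ∀ v : ℝ, P.eval (cos v) * cos v
        = (Polynomial.Chebyshev.U ℝ (2 * N : ℕ)).eval (cos v)
          - (Polynomial.Chebyshev.T ℝ (2 * N : ℕ)).eval (cos v) := by
      intro v
      rw [Polynomial.Chebyshev.T_eq_U_sub_X_mul_U, hP]
      simp [mul_comm]
    simp_rw [h]
    rw [intervalIntegral.integral_sub, hT, integral_eval_U_even_cos, sub_zero]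
    · exact Continuous.intervalIntegrable (by fun_prop) _ _
    · exact Continuous.intervalIntegrable (by fun_prop) _ _
  have hint1 : IntervalIntegrable (fun v => log (sin v) * cos (2 * N * v)) volume 0 π :=
    (intervalIntegrable_log_sin (a := 0) (b := π)).mul_continuousOn (by fun_prop)
  have hint2 : IntervalIntegrable (fun v => P.eval (cos v) * cos v) volume 0 π :=
    Continuous.intervalIntegrable (by fun_prop) _ _
  have key := integral_eq_sub_of_hasDerivAt_of_le pi_pos.le
    (f := fun v => P.eval (cos v) * (sin v * log (sin v)))
    (f' := fun v => 2 * N * (log (sin v) * cos (2 * N * v)) + P.eval (cos v) * cos v)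
    (Continuous.continuousOn (by
      have := Real.continuous_mul_log.comp continuous_sin
      simp only [Function.comp_def] at this
      fun_prop))
    (fun v hv => by
      have hs := sin_pos_of_pos_of_lt_pi hv.1 hv.2
      have h1 := (hasDerivAt_sin v).log hs.ne'
      have h2 : HasDerivAt (fun v : ℝ => sin (2 * N * v)) (cos (2 * N * v) * (2 * N)) v := by
        simpa using ((hasDerivAt_id v).const_mul (2 * (N : ℝ))).sin
      convert! h2.mul h1 using 1
      · funext w
        simp only [Pi.mul_apply]
        rw [← hPsin]; ring
      · rw [← hPsin]
        field_simp)
    ((hint1.const_mul _).add hint2)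
  rw [intervalIntegral.integral_add (hint1.const_mul _) hint2,
    intervalIntegral.integral_const_mul, hPcos] at key
  simp only [sin_pi, sin_zero, zero_mul, mul_zero, sub_zero] at key
  field_simp
  linarith

theorem integral_log_sin_mul_sin (N : ℕ) :
    ∫ v in (0 : ℝ)..π, log (sin v) * sin (2 * N * v) = 0 := by
  have h := intervalIntegral.integral_comp_sub_left
    (fun v => log (sin v) * sin (2 * N * v)) π (a := 0) (b := π)
  have h2 : ∀ v : ℝ, log (sin (π - v)) * sin (2 * N * (π - v))
      = -(log (sin v) * sin (2 * N * v)) := by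
    intro v
    have : 2 * N * (π - v) = N * (2 * π) - 2 * N * v := by ring
    rw [sin_pi_sub, this, sin_nat_mul_two_pi_sub]
    ring
  simp only [h2, sub_self, sub_zero, intervalIntegral.integral_neg] at h
  linarith

theorem integral_log_sin_sub_mul_cos {N : ℕ} (hN : N ≠ 0) (a t : ℝ) :
    ∫ v in a..(a + π), log (sin (v - t)) * cos (2 * N * v)
      = -π / (2 * N) * cos (2 * N * t) := by
  have hper : Function.Periodic (fun s => log (sin s) * cos (2 * N * (s + t))) π := by
    intro s
    have : 2 * N * (s + π + t) = 2 * N * (s + t) + N * (2 * π) := by ring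
    simp only [sin_add_pi, log_neg_eq_log, this, cos_add_nat_mul_two_pi]
  have h1 := intervalIntegral.integral_comp_sub_right
    (fun s => log (sin s) * cos (2 * N * (s + t))) t (a := a) (b := a + π)
  have e : a + π - t = (a - t) + π := by ring
  simp only [sub_add_cancel] at h1
  rw [h1, e, hper.intervalIntegral_add_eq (a - t) 0, zero_add]
  have h2 : ∀ s : ℝ, log (sin s) * cos (2 * N * (s + t))
      = (log (sin s) * cos (2 * N * s)) * cos (2 * N * t)
        - (log (sin s) * sin (2 * N * s)) * sin (2 * N * t) := by
    intro s
    rw [mul_add, cos_add]; ring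
  simp_rw [h2]
  have hL := intervalIntegrable_log_sin (a := 0) (b := π)
  rw [intervalIntegral.integral_sub, intervalIntegral.integral_mul_const,
    intervalIntegral.integral_mul_const, integral_log_sin_mul_cos hN, integral_log_sin_mul_sin]
  · ring
  · exact (hL.mul_continuousOn (by fun_prop)).mul_const _
  · exact (hL.mul_continuousOn (by fun_prop)).mul_const _

theorem intervalIntegrable_log_sin_sub_mul_cos (a b c t : ℝ) :
    IntervalIntegrable (fun v => log (sin (v - t)) * cos (c * v)) volume a b := by
  have h := (intervalIntegrable_log_sin (a := a - t) (b := b - t)).comp_sub_right t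
  simp only [sub_add_cancel, Function.comp_def] at h
  exact h.mul_continuousOn (by fun_prop)

theorem ae_sin_sub_ne_zero (t : ℝ) : ∀ᵐ v : ℝ, sin (v - t) ≠ 0 := by
  have : {v : ℝ | sin (v - t) = 0} ⊆ range fun k : ℤ => (k : ℝ) * π + t := by
    intro v hv
    obtain ⟨k, hk⟩ := sin_eq_zero_iff.1 hv
    exact ⟨k, by simp only [hk]; ring⟩
  have := ((countable_range _).mono this).ae_notMem volume
  simpa using this

theorem integral_log_abs_cos_sub_cos_mul_cos {N : ℕ} (hN : N ≠ 0) (θ : ℝ) :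
    ∫ φ in (0 : ℝ)..π, log |cos θ - cos φ| * cos (N * φ) = -π / N * cos (N * θ) := by
  have hN0 : (N : ℝ) ≠ 0 := Nat.cast_ne_zero.2 hN
  set g : ℝ → ℝ := fun φ => log |cos θ - cos φ| * cos (N * φ) with hg
  set h : ℝ → ℝ := fun v => log 2 * cos (2 * N * v)
    + log (sin (v - (-(θ / 2)))) * cos (2 * N * v)
    + log (sin (v - θ / 2)) * cos (2 * N * v) with hh
  have hgh : ∀ᵐ v : ℝ, g (2 * v) = h v := by
    filter_upwards [ae_sin_sub_ne_zero (-(θ / 2)), ae_sin_sub_ne_zero (θ / 2)] with v h1 h2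
    have e : cos θ - cos (2 * v) = 2 * sin (v - (-(θ / 2))) * sin (v - θ / 2) := by
      rw [cos_sub_cos, show (θ + 2 * v) / 2 = v - (-(θ / 2)) by ring,
        show (θ - 2 * v) / 2 = -(v - θ / 2) by ring, sin_neg]
      ring
    simp only [hg, hh, log_abs]
    rw [e, log_mul (by positivity) h2, log_mul two_ne_zero h1,
      show (N : ℝ) * (2 * v) = 2 * N * v by ring]
    ring
  have i1 : ∀ a b, IntervalIntegrable (fun v => log 2 * cos (2 * N * v)) volume a b :=
    fun a b => Continuous.intervalIntegrable (by fun_prop) _ _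
  have i2 := fun a b s => intervalIntegrable_log_sin_sub_mul_cos a b (2 * N) s
  have hint : ∀ a b, IntervalIntegrable g volume a b := by
    intro a b
    have hi : IntervalIntegrable (fun v => g (2 * v)) volume (a / 2) (b / 2) :=
      (((i1 _ _).add (i2 _ _ _)).add (i2 _ _ _)).congr_ae
        (ae_restrict_of_ae (by filter_upwards [hgh] with v hv using hv.symm))
    simpa using hi.comp_mul_left (c := 1 / 2)
  have hc : ∫ v in (-(π / 2))..(-(π / 2) + π), cos (2 * N * v) = 0 := by
    rw [intervalIntegral.integral_comp_mul_left (fun x => cos x) (by positivity), integral_cos,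
      show 2 * (N : ℝ) * (-(π / 2) + π) = N * π by ring,
      show 2 * (N : ℝ) * -(π / 2) = -(N * π) by ring]
    simp
  have hI : ∫ v in (-(π / 2))..(-(π / 2) + π), h v = -π / N * cos (N * θ) := by
    rw [hh, intervalIntegral.integral_add ((i1 _ _).add (i2 _ _ _)) (i2 _ _ _),
      intervalIntegral.integral_add (i1 _ _) (i2 _ _ _), intervalIntegral.integral_const_mul, hc,
      integral_log_sin_sub_mul_cos hN, integral_log_sin_sub_mul_cos hN,
      show 2 * (N : ℝ) * -(θ / 2) = -(N * θ) by ring, cos_neg,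
      show 2 * (N : ℝ) * (θ / 2) = N * θ by ring]
    field_simp
    ring
  have heven : ∫ φ in (-π)..0, g φ = ∫ φ in (0 : ℝ)..π, g φ := by
    have := intervalIntegral.integral_comp_neg g (a := 0) (b := π)
    rw [neg_zero] at this
    rw [← this]
    simp [hg]
  have hscale : ∫ v in (-(π / 2))..(-(π / 2) + π), g (2 * v) = ∫ φ in (0 : ℝ)..π, g φ := by
    rw [intervalIntegral.integral_comp_mul_left g two_ne_zero,
      show 2 * -(π / 2) = -π by ring, show 2 * (-(π / 2) + π) = π by ring,
      ← intervalIntegral.integral_add_adjacent_intervals (hint (-π) 0) (hint 0 π), heven,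
      smul_eq_mul]
    ring
  rw [← hscale, ← hI]
  exact intervalIntegral.integral_congr_ae (by filter_upwards [hgh] with v hv _ using hv)

theorem integral_mul_pCheb (f : ℝ → ℝ) (n : ℕ) :
    ∫ x in (-1 : ℝ)..1, f x * pCheb n x
      = -((n : ℝ) + 1) * ∫ θ in (0 : ℝ)..π, f (cos θ) * cos ((n + 1 : ℕ) * θ) := by
  have h1 : ∫ x in (-1 : ℝ)..1, f x * pCheb n x = ∫ x in (-1 : ℝ)..1,
      -((n : ℝ) + 1) * ((f x * (Polynomial.Chebyshev.T ℝ (n + 1)).eval x) * √(1 - x ^ 2)⁻¹) := by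
    refine intervalIntegral.integral_congr_ae ?_
    filter_upwards [(countable_singleton (1 : ℝ)).ae_notMem volume] with x hx hx'
    rw [uIoc_of_le (by norm_num)] at hx'
    rw [pCheb_eq n ⟨hx'.1, lt_of_le_of_ne hx'.2 hx⟩]
    ring
  rw [h1, intervalIntegral.integral_const_mul, ← Polynomial.Chebyshev.integral_measureT,
    Polynomial.Chebyshev.integral_measureT_eq_integral_cos]
  congr 1
  refine intervalIntegral.integral_congr fun θ _ => ?_
  simp only [Polynomial.Chebyshev.T_real_cos]
  push_cast
  rfl

/-- The weighted single layer potential of `pₙ` at `cos θ`. -/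
theorem integral_log_mul_pCheb (n : ℕ) (θ : ℝ) :
    ∫ y in (-1 : ℝ)..1, log |cos θ - y| * pCheb n y = π * cos ((n + 1 : ℕ) * θ) := by
  rw [integral_mul_pCheb (fun y => log |cos θ - y|),
    integral_log_abs_cos_sub_cos_mul_cos n.succ_ne_zero]
  have : ((n : ℝ) + 1) ≠ 0 := by positivity
  push_cast
  field_simp

theorem integral_cos_mul_cos_nat (m n : ℕ) :
    ∫ θ in (0 : ℝ)..π, cos ((n + 1 : ℕ) * θ) * cos ((m + 1 : ℕ) * θ)
      = if m = n then π / 2 else 0 := by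
  have h := Polynomial.Chebyshev.integral_measureT_eq_integral_cos (f := fun x =>
    (Polynomial.Chebyshev.T ℝ (n + 1 : ℕ)).eval x * (Polynomial.Chebyshev.T ℝ (m + 1 : ℕ)).eval x)
  simp only [Polynomial.Chebyshev.T_real_cos, Int.cast_natCast] at h
  rw [← h]
  split_ifs with hmn
  · rw [hmn, Polynomial.Chebyshev.integral_T_real_mul_self_measureT_of_ne_zero n.succ_ne_zero]
  · exact Polynomial.Chebyshev.integral_eval_T_real_mul_eval_T_real_measureT_of_ne (by omega)

/-- The eigenvalue relation `N_{0,ω} Uₙ = ((n+1)/2) Uₙ` for the weighted Laplace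
hypersingular operator, in variational form: the double integral
`-(1/(2π)) ∬ ln|x-y| pₘ(x) pₙ(y) dx dy` equals `(n+1)π/4` if `m = n` and `0` else. -/
theorem weighted_hypersingular_chebU_eigen (m n : ℕ) :
    (-(1 / (2 * π)) * ∫ x in (-1 : ℝ)..1, ∫ y in (-1 : ℝ)..1,
        Real.log |x - y| * pCheb m x * pCheb n y)
      = if m = n then ((n : ℝ) + 1) * π / 4 else 0 := by
  have h1 : ∀ x : ℝ, ∫ y in (-1 : ℝ)..1, Real.log |x - y| * pCheb m x * pCheb n y
      = (∫ y in (-1 : ℝ)..1, Real.log |x - y| * pCheb n y) * pCheb m x := by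
    intro x
    rw [← intervalIntegral.integral_mul_const]
    congr 1
    funext y
    ring
  simp_rw [h1]
  rw [integral_mul_pCheb (fun x => ∫ y in (-1 : ℝ)..1, Real.log |x - y| * pCheb n y)]
  simp_rw [integral_log_mul_pCheb, mul_assoc π]
  rw [intervalIntegral.integral_const_mul, integral_cos_mul_cos_nat]
  split_ifs with hmn
  · subst hmn
    field_simp
    ring
  · simp
end

section
/- Let f be a measurable real-valued function on (−1,1) with ∫_{−1}^{1} f(x)²·√(1−x²) dx < ∞, and define its second-kind Chebyshev coefficients by b̂ₙ = (2/π)∫_{−1}^{1} f(x)·Uₙ(x)·√(1−x²) dx for n ≥ 0. Then the following are equivalent: (i) for every natural number s, Σ_{n=0}^{∞} (1+(n+1)²)^s·b̂ₙ² < ∞; (ii) there exists an infinitely differentiable function g : ℝ → ℝ such that f = g almost everywhere on (−1,1). (This is the identification U^∞ = C^∞([−1,1]).) -/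
open Real Set MeasureTheory

/-- The second-kind Fourier–Chebyshev coefficients of a function on `(-1,1)`. -/
noncomputable def fourierChebU (f : ℝ → ℝ) : ℕ → ℝ := fun n =>
  (2 / π) * ∫ x in Ioo (-1 : ℝ) 1, f x * chebU n x * Real.sqrt (1 - x ^ 2)

/-! ### Bounds on Chebyshev polynomials of the second kind and their derivatives -/

lemma contDiff_chebU (n : ℕ) {m : WithTop ℕ∞} : ContDiff ℝ m (chebU n) := by
  have h := (Polynomial.Chebyshev.U ℝ n).contDiff_aeval (𝕜 := ℝ) m
  simp only [Polynomial.coe_aeval_eq_eval] at h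
  exact h

lemma continuous_chebU (n : ℕ) : Continuous (chebU n) :=
  (contDiff_chebU n (m := 0)).continuous

lemma chebU_cos_mul_sin (n : ℕ) (θ : ℝ) :
    chebU n (cos θ) * sin θ = sin ((n + 1) * θ) := by
  simp [chebU]

lemma chebU_zero (x : ℝ) : chebU 0 x = 1 := by
  simp [chebU]

lemma chebU_one (x : ℝ) : chebU 1 x = 2 * x := by
  simp [chebU]

lemma chebU_add_two (n : ℕ) (x : ℝ) :
    chebU (n + 2) x = 2 * x * chebU (n + 1) x - chebU n x := by
  simp [chebU, Polynomial.Chebyshev.U_add_two]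

lemma abs_chebU_le {x : ℝ} (hx : |x| ≤ 1) (n : ℕ) : |chebU n x| ≤ n + 1 := by
  induction n with
  | zero => simp [chebU_zero]
  | succ n ih =>
    have h := congrArg (Polynomial.eval x) (Polynomial.Chebyshev.U_eq_X_mul_U_add_T ℝ n)
    have hT := Polynomial.Chebyshev.abs_eval_T_real_le_one (n + 1) hx
    simp only [Polynomial.eval_add, Polynomial.eval_mul, Polynomial.eval_X] at h
    have h' : chebU (n + 1) x =
        x * chebU n x + (Polynomial.Chebyshev.T ℝ (n + 1)).eval x := by
      simpa [chebU] using h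
    rw [h']
    calc _ ≤ |x * chebU n x| + |(Polynomial.Chebyshev.T ℝ (n + 1)).eval x| := abs_add_le _ _
      _ ≤ 1 * (n + 1) + 1 := by rw [abs_mul]; gcongr
      _ = _ := by push_cast; ring

lemma iteratedDeriv_polynomial_eval (p : Polynomial ℝ) (k : ℕ) :
    iteratedDeriv k (fun x => p.eval x) =
      fun x => (Polynomial.derivative^[k] p).eval x := by
  induction k generalizing p with
  | zero => simp
  | succ k ih =>
    have : deriv (fun x => p.eval x) = fun x => (Polynomial.derivative p).eval x := by
      ext x; simp
    rw [iteratedDeriv_succ', this, ih, Function.iterate_succ_apply]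

lemma derivative_U_add_two (n : ℕ) :
    Polynomial.derivative (Polynomial.Chebyshev.U ℝ ((n + 2 : ℕ) : ℤ)) =
      Polynomial.C (2 * (n + 2) : ℝ) * Polynomial.Chebyshev.U ℝ ((n + 1 : ℕ) : ℤ) +
        Polynomial.derivative (Polynomial.Chebyshev.U ℝ (n : ℤ)) := by
  have h := congrArg Polynomial.derivative (Polynomial.Chebyshev.U_eq_two_mul_T_add_U ℝ (n : ℤ))
  simp only [Polynomial.derivative_add, Polynomial.derivative_mul,
    Polynomial.Chebyshev.T_derivative_eq_U, Polynomial.derivative_ofNat] at h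
  rw [show (n : ℤ) + 2 - 1 = ((n + 1 : ℕ) : ℤ) by push_cast; ring] at h
  push_cast at h ⊢
  rw [h, map_mul, map_add, map_natCast, show Polynomial.C (2 : ℝ) = 2 from rfl]
  ring

lemma iteratedDeriv_chebU_add_two (k n : ℕ) (x : ℝ) :
    iteratedDeriv (k + 1) (chebU (n + 2)) x =
      2 * (n + 2) * iteratedDeriv k (chebU (n + 1)) x +
        iteratedDeriv (k + 1) (chebU n) x := by
  unfold chebU
  simp only [iteratedDeriv_polynomial_eval, Function.iterate_succ_apply, derivative_U_add_two,
    iterate_map_add, Polynomial.iterate_derivative_C_mul, Polynomial.eval_add,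
    Polynomial.eval_mul, Polynomial.eval_C]

/-- Bounds on `U₀, …, Uₙ` at a point propagate to their derivatives at that point. -/
lemma abs_iteratedDeriv_chebU_le_of_le {n : ℕ} {x B : ℝ} (h : ∀ m ≤ n, |chebU m x| ≤ B) (k : ℕ) :
    ∀ m ≤ n, |iteratedDeriv k (chebU m) x| ≤ ((n : ℝ) + 1) ^ (2 * k) * B := by
  induction k with
  | zero => simpa using h
  | succ k ih =>
    set M : ℝ := ((n : ℝ) + 1) ^ (2 * k) * B with hM
    have hM0 : 0 ≤ M := (abs_nonneg _).trans (ih 0 (Nat.zero_le n))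
    have key : ∀ m ≤ n, |iteratedDeriv (k + 1) (chebU m) x| ≤ ((m : ℝ) + 1) ^ 2 * M := by
      intro m
      induction m using Nat.twoStepInduction with
      | zero =>
        intro _
        have : iteratedDeriv (k + 1) (chebU 0) x = 0 := by
          rw [show chebU 0 = fun _ => (1 : ℝ) from funext chebU_zero]
          simp [iteratedDeriv_const]
        rw [this]; simpa using hM0
      | one =>
        intro h1
        have : iteratedDeriv (k + 1) (chebU 1) x = 2 * iteratedDeriv k (chebU 0) x := by
          rw [iteratedDeriv_succ', show chebU 1 = fun y => 2 * y from funext chebU_one,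
            show deriv (fun y : ℝ => 2 * y) = fun y => 2 * chebU 0 y from ?_,
            iteratedDeriv_const_mul_field]
          ext y
          simp [chebU_zero]
        rw [this, abs_mul, abs_two]
        have := ih 0 (Nat.zero_le n)
        push_cast
        nlinarith
      | more m ihm _ =>
        intro h2
        rw [iteratedDeriv_chebU_add_two]
        calc _ ≤ |2 * ((m : ℝ) + 2) * iteratedDeriv k (chebU (m + 1)) x| +
              |iteratedDeriv (k + 1) (chebU m) x| := abs_add_le _ _
          _ ≤ 2 * ((m : ℝ) + 2) * M + ((m : ℝ) + 1) ^ 2 * M := by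
            rw [abs_mul, abs_of_nonneg (by positivity : (0 : ℝ) ≤ 2 * ((m : ℝ) + 2))]
            gcongr
            · exact ih _ (by omega)
            · exact ihm (by omega)
          _ ≤ _ := by push_cast; nlinarith
    intro m hm
    calc _ ≤ ((m : ℝ) + 1) ^ 2 * M := key m hm
      _ ≤ ((n : ℝ) + 1) ^ 2 * M := by gcongr
      _ = _ := by rw [hM]; ring

lemma abs_chebU_le_of_abs_le {n : ℕ} {x : ℝ} (hx : |x| ≤ 1 + 1 / (2 * ((n : ℝ) + 1) ^ 2)) :
    ∀ m ≤ n, |chebU m x| ≤ 2 * ((n : ℝ) + 1) := by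
  set δ : ℝ := 1 / (2 * ((n : ℝ) + 1) ^ 2) with hδ
  have hδ0 : 0 ≤ δ := by positivity
  have hmax : ∀ m : ℕ, ∃ y ∈ Icc (-(1 + δ)) (1 + δ),
      ∀ z ∈ Icc (-(1 + δ)) (1 + δ), |chebU m z| ≤ |chebU m y| := fun m =>
    isCompact_Icc.exists_isMaxOn ⟨0, by constructor <;> linarith⟩
      (continuous_chebU m).abs.continuousOn
  choose y hy hymax using hmax
  obtain ⟨m₀, hm₀, hmax₀⟩ := Finset.exists_max_image (Finset.range (n + 1))
    (fun m => |chebU m (y m)|) ⟨0, by simp⟩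
  set M := |chebU m₀ (y m₀)| with hM
  have hle : ∀ m ≤ n, ∀ z ∈ Icc (-(1 + δ)) (1 + δ), |chebU m z| ≤ M := fun m hm z hz =>
    (hymax m z hz).trans (hmax₀ m (by simp; omega))
  have hm₀n : m₀ ≤ n := by simp at hm₀; omega
  have hderiv : ∀ z ∈ Icc (-(1 + δ)) (1 + δ), ‖deriv (chebU m₀) z‖ ≤ ((n : ℝ) + 1) ^ 2 * M := by
    intro z hz
    simpa using abs_iteratedDeriv_chebU_le_of_le (fun m hm => hle m hm z hz) 1 m₀ hm₀n
  obtain ⟨w, hw, hwd⟩ : ∃ w : ℝ, |w| ≤ 1 ∧ |y m₀ - w| ≤ δ ∧ w ∈ Icc (-(1 + δ)) (1 + δ) := by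
    have h1 := (hy m₀).1
    have h2 := (hy m₀).2
    rcases le_total (y m₀) (-1) with h | h
    · refine ⟨-1, by simp, ?_, by linarith, by linarith⟩
      rw [abs_le]; constructor <;> linarith
    rcases le_total (y m₀) 1 with h' | h'
    · exact ⟨y m₀, abs_le.2 ⟨h, h'⟩, by simpa using hδ0, h1, h2⟩
    · refine ⟨1, by simp, ?_, by linarith, by linarith⟩
      rw [abs_le]; constructor <;> linarith
  have hmv := (convex_Icc (-(1 + δ)) (1 + δ)).norm_image_sub_le_of_norm_deriv_le
    (fun z _ => (contDiff_chebU m₀ (m := 1)).differentiable one_ne_zero z) hderiv hwd.2 (hy m₀)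
  have hwU := abs_chebU_le hw m₀
  have hM0 : 0 ≤ M := abs_nonneg _
  have hmn : (m₀ : ℝ) ≤ n := by exact_mod_cast hm₀n
  have hhalf : ((n : ℝ) + 1) ^ 2 * M * δ = M / 2 := by
    rw [hδ]; field_simp
  have hMle : M ≤ 2 * ((n : ℝ) + 1) := by
    have h1 : M ≤ |chebU m₀ w| + |chebU m₀ (y m₀) - chebU m₀ w| := by
      have := abs_add_le (chebU m₀ w) (chebU m₀ (y m₀) - chebU m₀ w)
      rwa [add_sub_cancel] at this
    have h2 : |chebU m₀ (y m₀) - chebU m₀ w| ≤ M / 2 := by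
      rw [← hhalf]
      exact hmv.trans (mul_le_mul_of_nonneg_left hwd.1 (by positivity))
    linarith
  intro m hm
  exact (hle m hm x (abs_le.1 hx)).trans hMle

/-! ### Smooth extension of Chebyshev polynomials with polynomially bounded derivatives -/

/-- On `S n`, every derivative of `f n` is bounded by a polynomial in `n`. -/
def PolyBoundedDerivs (S : ℕ → Set ℝ) (f : ℕ → ℝ → ℝ) : Prop :=
  ∀ k : ℕ, ∃ C : ℝ, ∃ p : ℕ, 0 ≤ C ∧ ∀ n, ∀ x ∈ S n,
    ‖iteratedFDeriv ℝ k (f n) x‖ ≤ C * ((n : ℝ) + 1) ^ p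

lemma PolyBoundedDerivs.mul {S : ℕ → Set ℝ} {f g : ℕ → ℝ → ℝ}
    (hf : PolyBoundedDerivs S f) (hg : PolyBoundedDerivs S g)
    (hfs : ∀ n, ContDiff ℝ (⊤ : ℕ∞) (f n)) (hgs : ∀ n, ContDiff ℝ (⊤ : ℕ∞) (g n)) :
    PolyBoundedDerivs S (fun n x => f n x * g n x) := by
  choose C p hC hCp using hf
  choose D q hD hDq using hg
  intro k
  refine ⟨∑ i ∈ Finset.range (k + 1), (k.choose i : ℝ) * C i * D (k - i),
    ∑ i ∈ Finset.range (k + 1), (p i + q (k - i)),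
    Finset.sum_nonneg fun i _ => mul_nonneg (mul_nonneg (by positivity) (hC _)) (hD _), ?_⟩
  intro n x hx
  have hn : (1 : ℝ) ≤ (n : ℝ) + 1 := by simp
  refine (norm_iteratedFDeriv_mul_le (hfs n) (hgs n) x (by exact_mod_cast le_top)).trans ?_
  rw [Finset.sum_mul]
  refine Finset.sum_le_sum fun i hi => ?_
  have hpow : ((n : ℝ) + 1) ^ (p i + q (k - i)) ≤
      ((n : ℝ) + 1) ^ (∑ i ∈ Finset.range (k + 1), (p i + q (k - i))) :=
    pow_le_pow_right₀ hn
      (Finset.single_le_sum (f := fun i => p i + q (k - i)) (fun _ _ => Nat.zero_le _) hi)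
  calc _ ≤ (k.choose i : ℝ) * (C i * ((n : ℝ) + 1) ^ p i) *
        (D (k - i) * ((n : ℝ) + 1) ^ q (k - i)) := by
        gcongr
        · exact mul_nonneg (Nat.cast_nonneg _) (mul_nonneg (hC _) (by positivity))
        · exact hCp i n x hx
        · exact hDq _ n x hx
    _ = (k.choose i : ℝ) * C i * D (k - i) * ((n : ℝ) + 1) ^ (p i + q (k - i)) := by ring
    _ ≤ _ := mul_le_mul_of_nonneg_left hpow
        (mul_nonneg (mul_nonneg (by positivity) (hC _)) (hD _))

lemma exists_abs_iteratedDeriv_smoothTransition_le (k : ℕ) :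
    ∃ C : ℝ, 0 ≤ C ∧ ∀ x, |iteratedDeriv k smoothTransition x| ≤ C := by
  have hc : Continuous (iteratedDeriv k smoothTransition) :=
    (smoothTransition.contDiff (n := ⊤)).continuous_iteratedDeriv k (by exact_mod_cast le_top)
  obtain ⟨C, hC⟩ := (isCompact_Icc (a := (0 : ℝ)) (b := 1)).exists_bound_of_continuousOn
    hc.continuousOn
  refine ⟨max C 1, by positivity, fun x => ?_⟩
  have hconst : ∀ c : ℝ, |c| ≤ 1 → |iteratedDeriv k (fun _ : ℝ => c) x| ≤ max C 1 := by
    intro c hc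
    rw [iteratedDeriv_const]
    split_ifs
    · exact hc.trans (le_max_right _ _)
    · simp
  rcases lt_or_ge x 0 with h | h
  · have : smoothTransition =ᶠ[nhds x] fun _ => 0 := by
      filter_upwards [Iio_mem_nhds h] with y hy using smoothTransition.zero_of_nonpos hy.le
    rw [this.iteratedDeriv_eq k]
    exact hconst 0 (by simp)
  rcases le_or_gt x 1 with h' | h'
  · exact (hC x ⟨h, h'⟩).trans (le_max_left _ _)
  · have : smoothTransition =ᶠ[nhds x] fun _ => 1 := by
      filter_upwards [Ioi_mem_nhds h'] with y hy using smoothTransition.one_of_one_le (le_of_lt hy)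
    rw [this.iteratedDeriv_eq k]
    exact hconst 1 (by simp)

/-- A smooth step equal to `1` for `x ≤ 1` and to `0` for `x ≥ 1 + 1 / (2 (n + 1)²)`. -/
noncomputable def chebStep (n : ℕ) (x : ℝ) : ℝ :=
  smoothTransition ((2 * ((n : ℝ) + 1) ^ 2 + 1) + -(2 * ((n : ℝ) + 1) ^ 2) * x)

lemma contDiff_chebStep (n : ℕ) : ContDiff ℝ (⊤ : ℕ∞) (chebStep n) :=
  smoothTransition.contDiff.comp (by fun_prop)

lemma chebStep_eq_one (n : ℕ) {x : ℝ} (hx : x ≤ 1) : chebStep n x = 1 := by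
  apply smoothTransition.one_of_one_le
  nlinarith [sq_nonneg ((n : ℝ) + 1)]

lemma chebStep_eq_zero (n : ℕ) {x : ℝ} (hx : 1 + 1 / (2 * ((n : ℝ) + 1) ^ 2) ≤ x) :
    chebStep n x = 0 := by
  apply smoothTransition.zero_of_nonpos
  have h : (2 * ((n : ℝ) + 1) ^ 2) * (1 + 1 / (2 * ((n : ℝ) + 1) ^ 2)) =
      2 * ((n : ℝ) + 1) ^ 2 + 1 := by field_simp
  have h' := mul_le_mul_of_nonneg_left hx (by positivity : 0 ≤ 2 * ((n : ℝ) + 1) ^ 2)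
  linarith

lemma iteratedDeriv_chebStep (n k : ℕ) (x : ℝ) :
    iteratedDeriv k (chebStep n) x = (-(2 * ((n : ℝ) + 1) ^ 2)) ^ k *
      iteratedDeriv k smoothTransition
        ((2 * ((n : ℝ) + 1) ^ 2 + 1) + -(2 * ((n : ℝ) + 1) ^ 2) * x) := by
  have h := congrFun (iteratedDeriv_comp_const_mul (n := k)
    (f := fun y => smoothTransition ((2 * ((n : ℝ) + 1) ^ 2 + 1) + y))
    (smoothTransition.contDiff.comp (by fun_prop)) (-(2 * ((n : ℝ) + 1) ^ 2))) x
  rw [iteratedDeriv_comp_const_add] at h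
  exact h

lemma polyBoundedDerivs_chebStep (S : ℕ → Set ℝ) : PolyBoundedDerivs S chebStep := by
  intro k
  obtain ⟨C, hC0, hC⟩ := exists_abs_iteratedDeriv_smoothTransition_le k
  refine ⟨2 ^ k * C, 2 * k, by positivity, fun n x _ => ?_⟩
  rw [norm_iteratedFDeriv_eq_norm_iteratedDeriv, iteratedDeriv_chebStep, norm_mul, norm_pow,
    norm_neg, Real.norm_of_nonneg (by positivity : 0 ≤ 2 * ((n : ℝ) + 1) ^ 2)]
  calc _ ≤ (2 * ((n : ℝ) + 1) ^ 2) ^ k * C := by gcongr; exact hC _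
    _ = _ := by rw [mul_pow, ← pow_mul]; ring

lemma polyBoundedDerivs_chebStep_neg (S : ℕ → Set ℝ) :
    PolyBoundedDerivs S (fun n x => chebStep n (-x)) := by
  intro k
  obtain ⟨C, p, hC0, hC⟩ := polyBoundedDerivs_chebStep (fun _ => univ) k
  refine ⟨C, p, hC0, fun n x _ => ?_⟩
  rw [norm_iteratedFDeriv_eq_norm_iteratedDeriv, iteratedDeriv_comp_neg, norm_smul, norm_pow,
    norm_neg, norm_one, one_pow, one_mul, ← norm_iteratedFDeriv_eq_norm_iteratedDeriv]
  exact hC n (-x) trivial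

/-- A smooth function on `ℝ` that agrees with `chebU n` on `[-1, 1]` and vanishes away from it. -/
noncomputable def chebUExt (n : ℕ) (x : ℝ) : ℝ :=
  chebStep n x * chebStep n (-x) * chebU n x

lemma contDiff_chebUExt (n : ℕ) : ContDiff ℝ (⊤ : ℕ∞) (chebUExt n) :=
  ((contDiff_chebStep n).mul ((contDiff_chebStep n).comp contDiff_neg)).mul (contDiff_chebU n)

lemma chebUExt_eq_chebU (n : ℕ) {x : ℝ} (hx : x ∈ Icc (-1 : ℝ) 1) : chebUExt n x = chebU n x := by
  simp [chebUExt, chebStep_eq_one n hx.2, chebStep_eq_one n (neg_le.1 hx.1)]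

lemma polyBoundedDerivs_chebUExt : PolyBoundedDerivs (fun _ => univ) chebUExt := by
  have hU : PolyBoundedDerivs (fun n => {x | |x| ≤ 1 + 1 / (2 * ((n : ℝ) + 1) ^ 2)}) chebU := by
    intro k
    refine ⟨2, 2 * k + 1, by norm_num, fun n x hx => ?_⟩
    rw [norm_iteratedFDeriv_eq_norm_iteratedDeriv]
    refine (abs_iteratedDeriv_chebU_le_of_le (abs_chebU_le_of_abs_le hx) k n le_rfl).trans_eq ?_
    ring
  have hE := ((polyBoundedDerivs_chebStep _).mul (polyBoundedDerivs_chebStep_neg _)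
    contDiff_chebStep fun n => (contDiff_chebStep n).comp contDiff_neg).mul hU
    (fun n => (contDiff_chebStep n).mul ((contDiff_chebStep n).comp contDiff_neg))
    (fun n => contDiff_chebU n)
  intro k
  obtain ⟨C, p, hC0, hC⟩ := hE k
  refine ⟨C, p, hC0, fun n x _ => ?_⟩
  rcases le_or_gt |x| (1 + 1 / (2 * ((n : ℝ) + 1) ^ 2)) with hx | hx
  · exact hC n x hx
  · have hzero : chebUExt n =ᶠ[nhds x] fun _ => 0 := by
      filter_upwards [(isOpen_lt continuous_const continuous_abs).mem_nhds hx] with y hy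
      rcases lt_abs.1 hy with h | h
      · simp [chebUExt, chebStep_eq_zero n h.le]
      · simp [chebUExt, chebStep_eq_zero n h.le]
    rw [norm_iteratedFDeriv_eq_norm_iteratedDeriv, hzero.iteratedDeriv_eq k, iteratedDeriv_const]
    simp only [ite_self, norm_zero]
    positivity

lemma summable_abs_mul_pow_of_summable_sq {b : ℕ → ℝ}
    (hb : ∀ s : ℕ, Summable (fun n : ℕ => (1 + ((n : ℝ) + 1) ^ 2) ^ s * b n ^ 2)) (p : ℕ) :
    Summable (fun n : ℕ => |b n| * ((n : ℝ) + 1) ^ p) := by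
  have h2 : Summable (fun n : ℕ => 1 / ((n : ℝ) + 1) ^ 2) := by
    have := (summable_nat_add_iff 1).2 (Real.summable_one_div_nat_pow.2 one_lt_two)
    simpa using this
  refine Summable.of_nonneg_of_le (fun n => by positivity) (fun n => ?_) ((hb (p + 1)).add h2)
  have hn : (0 : ℝ) < (n : ℝ) + 1 := by positivity
  have hpow : (((n : ℝ) + 1) ^ 2) ^ (p + 1) ≤ (1 + ((n : ℝ) + 1) ^ 2) ^ (p + 1) := by
    gcongr; linarith
  have h3 : |b n| * ((n : ℝ) + 1) ^ p ≤
      (((n : ℝ) + 1) ^ 2) ^ (p + 1) * b n ^ 2 + 1 / ((n : ℝ) + 1) ^ 2 := by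
    have e1 : |b n| * ((n : ℝ) + 1) ^ p =
        (|b n| * ((n : ℝ) + 1) ^ (p + 1)) * (1 / ((n : ℝ) + 1)) := by
      field_simp; ring
    have e2 : (((n : ℝ) + 1) ^ 2) ^ (p + 1) * b n ^ 2 = (|b n| * ((n : ℝ) + 1) ^ (p + 1)) ^ 2 := by
      rw [mul_pow, sq_abs, ← pow_mul, ← pow_mul, mul_comm 2 (p + 1), mul_comm]
    have e3 : 1 / ((n : ℝ) + 1) ^ 2 = (1 / ((n : ℝ) + 1)) ^ 2 := by rw [div_pow, one_pow]
    rw [e1, e2, e3]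
    nlinarith [sq_nonneg (|b n| * ((n : ℝ) + 1) ^ (p + 1) - 1 / ((n : ℝ) + 1)),
      sq_nonneg (|b n| * ((n : ℝ) + 1) ^ (p + 1)), sq_nonneg (1 / ((n : ℝ) + 1))]
  exact h3.trans (by gcongr)

lemma contDiff_tsum_mul_chebUExt {b : ℕ → ℝ}
    (hb : ∀ p : ℕ, Summable (fun n : ℕ => |b n| * ((n : ℝ) + 1) ^ p)) :
    ContDiff ℝ (⊤ : ℕ∞) (fun x => ∑' n, b n * chebUExt n x) := by
  choose C p hC0 hC using polyBoundedDerivs_chebUExt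
  refine contDiff_tsum (v := fun k n => C k * (|b n| * ((n : ℝ) + 1) ^ p k))
    (fun n => contDiff_const.mul (contDiff_chebUExt n)) (fun k _ => (hb (p k)).mul_left _) ?_
  intro k n x _
  rw [norm_iteratedFDeriv_eq_norm_iteratedDeriv, iteratedDeriv_const_mul_field, norm_mul,
    ← norm_iteratedFDeriv_eq_norm_iteratedDeriv, Real.norm_eq_abs]
  calc _ ≤ |b n| * (C k * ((n : ℝ) + 1) ^ p k) := by gcongr; exact hC k n x trivial
    _ = _ := by ring

/-! ### Chebyshev coefficients as Fourier sine coefficients -/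

lemma setIntegral_mul_sqrt_eq_integral_cos (F : ℝ → ℝ) :
    ∫ x in Ioo (-1 : ℝ) 1, F x * √(1 - x ^ 2) = ∫ θ in (0 : ℝ)..π, F (cos θ) * sin θ ^ 2 := by
  have h1 := Polynomial.Chebyshev.integral_measureT (fun x => F x * (1 - x ^ 2))
  rw [Polynomial.Chebyshev.integral_measureT_eq_integral_cos,
    intervalIntegral.integral_of_le (by norm_num : (-1 : ℝ) ≤ 1),
    integral_Ioc_eq_integral_Ioo] at h1
  have h2 : ∀ θ : ℝ, 1 - cos θ ^ 2 = sin θ ^ 2 := fun θ => by rw [sin_sq]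
  simp only [h2] at h1
  rw [h1]
  refine setIntegral_congr_fun measurableSet_Ioo fun x hx => ?_
  have hpos : 0 < 1 - x ^ 2 := by nlinarith [hx.1, hx.2]
  have hs : √(1 - x ^ 2) ≠ 0 := (Real.sqrt_pos.2 hpos).ne'
  have hsq := Real.mul_self_sqrt hpos.le
  simp only [Real.sqrt_inv, mul_assoc]
  congr 1
  field_simp
  linarith

lemma fourierChebU_eq_integral_sin (g : ℝ → ℝ) (n : ℕ) :
    fourierChebU g n =
      (2 / π) * ∫ θ in (0 : ℝ)..π, g (cos θ) * sin θ * sin (((n : ℝ) + 1) * θ) := by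
  rw [fourierChebU, setIntegral_mul_sqrt_eq_integral_cos (fun x => g x * chebU n x)]
  congr 2
  ext θ
  rw [← chebU_cos_mul_sin]
  ring

lemma integral_cos_int_mul (k : ℤ) :
    ∫ θ in (0 : ℝ)..π, cos (k * θ) = if k = 0 then π else 0 := by
  split_ifs with hk
  · simp [hk]
  · have h := Polynomial.Chebyshev.integral_eval_T_real_measureT_of_ne_zero hk
    rw [Polynomial.Chebyshev.integral_measureT_eq_integral_cos] at h
    simpa [Polynomial.Chebyshev.T_real_cos] using h

lemma fourierChebU_chebU (n m : ℕ) : fourierChebU (chebU n) m = if n = m then 1 else 0 := by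
  rw [fourierChebU_eq_integral_sin]
  have h : ∀ θ : ℝ, chebU n (cos θ) * sin θ * sin (((m : ℝ) + 1) * θ) =
      (1 / 2) * cos (((n - m : ℤ) : ℝ) * θ) - (1 / 2) * cos (((n + m + 2 : ℤ) : ℝ) * θ) := by
    intro θ
    rw [chebU_cos_mul_sin]
    have h1 : ((n - m : ℤ) : ℝ) * θ = ((n : ℝ) + 1) * θ - ((m : ℝ) + 1) * θ := by push_cast; ring
    have h2 : ((n + m + 2 : ℤ) : ℝ) * θ = ((n : ℝ) + 1) * θ + ((m : ℝ) + 1) * θ := by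
      push_cast; ring
    rw [h1, h2, cos_sub, cos_add]
    ring
  simp only [h]
  rw [intervalIntegral.integral_sub (Continuous.intervalIntegrable (by fun_prop) _ _)
    (Continuous.intervalIntegrable (by fun_prop) _ _), intervalIntegral.integral_const_mul,
    intervalIntegral.integral_const_mul, integral_cos_int_mul, integral_cos_int_mul,
    if_neg (by omega : (n + m + 2 : ℤ) ≠ 0)]
  by_cases hnm : n = m
  · simp [hnm]
    field_simp
  · rw [if_neg (by omega), if_neg hnm]
    simp

lemma exists_abs_fourierChebU_le {g : ℝ → ℝ} (hg : Continuous g) :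
    ∃ M : ℝ, ∀ n, |fourierChebU g n| ≤ M := by
  obtain ⟨M, hM⟩ := (isCompact_Icc (a := (-1 : ℝ)) (b := 1)).exists_bound_of_continuousOn
    hg.continuousOn
  refine ⟨2 / π * (M * |π - 0|), fun n => ?_⟩
  rw [fourierChebU_eq_integral_sin, abs_mul, abs_of_nonneg (by positivity : 0 ≤ 2 / π)]
  refine mul_le_mul_of_nonneg_left ?_ (by positivity)
  rw [← Real.norm_eq_abs]
  refine intervalIntegral.norm_integral_le_of_norm_le_const fun θ _ => ?_
  have h := hM (cos θ) ⟨neg_one_le_cos θ, cos_le_one θ⟩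
  have h0 : 0 ≤ M := (norm_nonneg _).trans h
  rw [norm_mul, norm_mul]
  calc _ ≤ M * 1 * 1 := by
        gcongr
        · exact abs_sin_le_one _
        · exact abs_sin_le_one _
    _ = M := by ring

/-- The differential operator with `chebOp Uₙ = (1 + (n + 1)²) Uₙ`. -/
noncomputable def chebOp (g : ℝ → ℝ) (x : ℝ) : ℝ :=
  2 * g x - ((1 - x ^ 2) * deriv (deriv g) x - 3 * x * deriv g x)

lemma contDiff_deriv_of_contDiff_infty {g : ℝ → ℝ} (hg : ContDiff ℝ (⊤ : ℕ∞) g) :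
    ContDiff ℝ (⊤ : ℕ∞) (deriv g) :=
  (contDiff_infty_iff_deriv.1 hg).2

lemma ContDiff.chebOp {g : ℝ → ℝ} (hg : ContDiff ℝ (⊤ : ℕ∞) g) :
    ContDiff ℝ (⊤ : ℕ∞) (chebOp g) := by
  have h1 := contDiff_deriv_of_contDiff_infty hg
  have h2 := contDiff_deriv_of_contDiff_infty h1
  unfold _root_.chebOp
  fun_prop

lemma fourierChebU_chebOp {g : ℝ → ℝ} (hg : ContDiff ℝ (⊤ : ℕ∞) g) (n : ℕ) :
    fourierChebU (chebOp g) n = (1 + ((n : ℝ) + 1) ^ 2) * fourierChebU g n := by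
  have hg1 := contDiff_deriv_of_contDiff_infty hg
  have hg2 := contDiff_deriv_of_contDiff_infty hg1
  have hgc := hg.continuous
  have hg1c := hg1.continuous
  have hg2c := hg2.continuous
  have hopc := hg.chebOp.continuous
  set m : ℝ := (n : ℝ) + 1 with hm
  have hmπ : sin (m * π) = 0 := by
    have := sin_nat_mul_pi (n + 1)
    rwa [Nat.cast_add_one] at this
  have hderiv : ∀ θ ∈ uIcc 0 π, HasDerivAt
      (fun θ => (-(deriv g (cos θ) * sin θ ^ 2) + g (cos θ) * cos θ) * sin (m * θ) -
        m * (g (cos θ) * sin θ) * cos (m * θ))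
      ((1 + m ^ 2) * (g (cos θ) * sin θ * sin (m * θ)) -
        chebOp g (cos θ) * sin θ * sin (m * θ)) θ := by
    intro θ _
    have hc := hasDerivAt_cos θ
    have hs := hasDerivAt_sin θ
    have hG := ((hg.differentiable (by simp)) (cos θ)).hasDerivAt.comp θ hc
    have hG1 := ((hg1.differentiable (by simp)) (cos θ)).hasDerivAt.comp θ hc
    have hmθ : HasDerivAt (fun θ : ℝ => m * θ) m θ := by
      simpa using (hasDerivAt_id θ).const_mul m
    have hsm := hmθ.sin
    have hcm := hmθ.cos
    have h := ((((hG1.mul (hs.pow 2)).neg.add (hG.mul hc)).mul hsm).sub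
      (((hG.mul hs).const_mul m).mul hcm))
    refine HasDerivAt.congr_deriv h ?_
    simp only [chebOp, Function.comp, Pi.mul_apply, Pi.add_apply, Pi.neg_apply, Pi.pow_apply]
    rw [show 1 - cos θ ^ 2 = sin θ ^ 2 by rw [sin_sq]]
    push_cast
    ring
  have hinteg := intervalIntegral.integral_eq_sub_of_hasDerivAt hderiv
    (Continuous.intervalIntegrable (by fun_prop) _ _)
  rw [intervalIntegral.integral_sub (Continuous.intervalIntegrable (by fun_prop) _ _)
    (Continuous.intervalIntegrable (by fun_prop) _ _),
    intervalIntegral.integral_const_mul] at hinteg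
  simp only [hmπ, sin_zero, mul_zero, sin_pi, zero_mul, sub_zero] at hinteg
  rw [fourierChebU_eq_integral_sin, fourierChebU_eq_integral_sin, ← hm]
  linear_combination (-(2 / π)) * hinteg

lemma fourierChebU_congr_ae {f g : ℝ → ℝ}
    (h : ∀ᵐ x ∂(volume.restrict (Ioo (-1 : ℝ) 1)), f x = g x) (n : ℕ) :
    fourierChebU f n = fourierChebU g n := by
  unfold fourierChebU
  congr 1
  refine integral_congr_ae ?_
  filter_upwards [h] with x hx
  rw [hx]

lemma summable_fourierChebU_of_contDiff {g : ℝ → ℝ} (hg : ContDiff ℝ (⊤ : ℕ∞) g) (s : ℕ) :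
    Summable (fun n : ℕ => (1 + ((n : ℝ) + 1) ^ 2) ^ s * fourierChebU g n ^ 2) := by
  have hiter : ∀ k : ℕ, ContDiff ℝ (⊤ : ℕ∞) (chebOp^[k] g) ∧ ∀ n,
      fourierChebU (chebOp^[k] g) n = (1 + ((n : ℝ) + 1) ^ 2) ^ k * fourierChebU g n := by
    intro k
    induction k with
    | zero => exact ⟨hg, fun n => by simp⟩
    | succ k ih =>
      rw [Function.iterate_succ_apply']
      exact ⟨ih.1.chebOp, fun n => by rw [fourierChebU_chebOp ih.1, ih.2]; ring⟩
  obtain ⟨M, hM⟩ := exists_abs_fourierChebU_le (hiter (s + 1)).1.continuous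
  obtain ⟨K, hK⟩ := exists_abs_fourierChebU_le hg.continuous
  have h2 : Summable (fun n : ℕ => M * K * (1 / ((n : ℝ) + 1) ^ 2)) := by
    have := (summable_nat_add_iff 1).2 (Real.summable_one_div_nat_pow.2 one_lt_two)
    exact Summable.mul_left _ (by simpa using this)
  refine Summable.of_nonneg_of_le (fun n => by positivity) (fun n => ?_) h2
  have hn : (0 : ℝ) < (n : ℝ) + 1 := by positivity
  have h := hM n
  rw [(hiter (s + 1)).2, abs_mul, abs_of_nonneg (by positivity)] at h
  have hM0 : 0 ≤ M := le_trans (by positivity) h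
  have h3 : ((n : ℝ) + 1) ^ 2 * ((1 + ((n : ℝ) + 1) ^ 2) ^ s * fourierChebU g n ^ 2) ≤ M * K := by
    calc _ ≤ (1 + ((n : ℝ) + 1) ^ 2) * ((1 + ((n : ℝ) + 1) ^ 2) ^ s * fourierChebU g n ^ 2) := by
          gcongr; linarith
      _ = ((1 + ((n : ℝ) + 1) ^ 2) ^ (s + 1) * |fourierChebU g n|) * |fourierChebU g n| := by
          rw [← sq_abs (fourierChebU g n)]; ring
      _ ≤ M * K := mul_le_mul h (hK n) (abs_nonneg _) hM0
  rw [mul_one_div, le_div_iff₀ (by positivity)]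
  linarith

/-! ### Completeness -/

lemma integrableOn_mul_continuous {φ u : ℝ → ℝ} (hφ : IntegrableOn φ (Ioo (-1 : ℝ) 1))
    (hu : Continuous u) : IntegrableOn (fun x => u x * φ x) (Ioo (-1 : ℝ) 1) := by
  obtain ⟨C, hC⟩ := (isCompact_Icc (a := (-1 : ℝ)) (b := 1)).exists_bound_of_continuousOn
    hu.continuousOn
  refine Integrable.bdd_mul (c := C) hφ hu.aestronglyMeasurable ?_
  filter_upwards [ae_restrict_mem measurableSet_Ioo] with x hx using hC x (Ioo_subset_Icc_self hx)

lemma ae_eq_zero_of_forall_integral_mul_polynomial_eq_zero {φ : ℝ → ℝ}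
    (hφ : IntegrableOn φ (Ioo (-1 : ℝ) 1))
    (h : ∀ p : Polynomial ℝ, ∫ x in Ioo (-1 : ℝ) 1, φ x * p.eval x = 0) :
    ∀ᵐ x ∂(volume.restrict (Ioo (-1 : ℝ) 1)), φ x = 0 := by
  rw [ae_restrict_iff' measurableSet_Ioo]
  refine isOpen_Ioo.ae_eq_zero_of_integral_contDiff_smul_eq_zero hφ.locallyIntegrableOn ?_
  intro g hg _ hsupp
  have hgc : Continuous g := hg.continuous
  have hset : ∫ x, g x • φ x = ∫ x in Ioo (-1 : ℝ) 1, g x * φ x := by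
    symm
    refine setIntegral_eq_integral_of_forall_compl_eq_zero fun x hx => ?_
    rw [image_eq_zero_of_notMem_tsupport fun hx' => hx (hsupp hx'), zero_mul]
  rw [hset]
  set A : ℝ := ∫ x in Ioo (-1 : ℝ) 1, |φ x| with hA
  have hA0 : 0 ≤ A := integral_nonneg fun _ => abs_nonneg _
  have hle : ∀ ε > 0, |∫ x in Ioo (-1 : ℝ) 1, g x * φ x| ≤ ε * A := by
    intro ε hε
    obtain ⟨p, hp⟩ := exists_polynomial_near_of_continuousOn (-1) 1 g hgc.continuousOn ε hε
    have hp0 : ∫ x in Ioo (-1 : ℝ) 1, p.eval x * φ x = 0 := by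
      simpa only [mul_comm] using h p
    have hsub : ∫ x in Ioo (-1 : ℝ) 1, g x * φ x =
        ∫ x in Ioo (-1 : ℝ) 1, (g x * φ x - p.eval x * φ x) := by
      rw [integral_sub (integrableOn_mul_continuous hφ hgc)
        (integrableOn_mul_continuous hφ p.continuous), hp0, sub_zero]
    rw [hsub, hA, ← integral_const_mul, ← Real.norm_eq_abs]
    refine norm_integral_le_of_norm_le (hφ.abs.const_mul ε) ?_
    filter_upwards [ae_restrict_mem measurableSet_Ioo] with x hx
    rw [← sub_mul, norm_mul, Real.norm_eq_abs, Real.norm_eq_abs, abs_sub_comm]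
    gcongr
    exact (hp x (Ioo_subset_Icc_self hx)).le
  have hz : |∫ x in Ioo (-1 : ℝ) 1, g x * φ x| ≤ 0 := by
    refine le_of_forall_pos_le_add fun ε hε => ?_
    have h1 := hle (ε / (A + 1)) (by positivity)
    have h2 : ε / (A + 1) * A ≤ ε := by
      rw [div_mul_eq_mul_div, div_le_iff₀ (by positivity)]
      nlinarith
    linarith
  exact abs_nonpos_iff.1 hz

lemma integrableOn_mul_sqrt_of_sq {f : ℝ → ℝ} (hmeas : Measurable f)
    (hL2 : IntegrableOn (fun x => f x ^ 2 * √(1 - x ^ 2)) (Ioo (-1 : ℝ) 1)) :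
    IntegrableOn (fun x => f x * √(1 - x ^ 2)) (Ioo (-1 : ℝ) 1) := by
  have hw : IntegrableOn (fun x : ℝ => √(1 - x ^ 2)) (Ioo (-1 : ℝ) 1) :=
    (Continuous.integrableOn_Icc (by fun_prop)).mono_set Ioo_subset_Icc_self
  refine (hL2.add hw).mono' (by fun_prop) (Filter.Eventually.of_forall fun x => ?_)
  have hs := Real.sqrt_nonneg (1 - x ^ 2)
  rw [norm_mul, Real.norm_of_nonneg hs, Real.norm_eq_abs]
  simp only [Pi.add_apply]
  have h1 : |f x| ≤ f x ^ 2 + 1 := by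
    nlinarith [sq_abs (f x), sq_nonneg (|f x| - 1), abs_nonneg (f x)]
  nlinarith

/-- The functions `Uₙ` span all polynomials. -/
lemma integral_mul_polynomial_eq_zero_of_chebU {φ : ℝ → ℝ}
    (hφ : IntegrableOn φ (Ioo (-1 : ℝ) 1))
    (h : ∀ n, ∫ x in Ioo (-1 : ℝ) 1, chebU n x * φ x = 0) (p : Polynomial ℝ) :
    ∫ x in Ioo (-1 : ℝ) 1, p.eval x * φ x = 0 := by
  have hX : ∀ k n : ℕ, ∫ x in Ioo (-1 : ℝ) 1, x ^ k * chebU n x * φ x = 0 := by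
    intro k
    induction k with
    | zero => simpa using h
    | succ k ih =>
      have hinteg : ∀ n, IntegrableOn (fun x => x ^ k * chebU n x * φ x) (Ioo (-1 : ℝ) 1) :=
        fun n => integrableOn_mul_continuous hφ ((continuous_pow k).mul (continuous_chebU n))
      intro n
      cases n with
      | zero =>
        have : ∀ x : ℝ, x ^ (k + 1) * chebU 0 x * φ x = (1 / 2) * (x ^ k * chebU 1 x * φ x) := by
          intro x
          rw [chebU_zero, chebU_one]; ring
        simp only [this, integral_const_mul, ih, mul_zero]
      | succ n =>
        have : ∀ x : ℝ, x ^ (k + 1) * chebU (n + 1) x * φ x =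
            (1 / 2) * (x ^ k * chebU (n + 2) x * φ x + x ^ k * chebU n x * φ x) := by
          intro x
          rw [chebU_add_two]; ring
        simp only [this, integral_const_mul]
        rw [integral_add (hinteg _) (hinteg _), ih, ih, add_zero, mul_zero]
  induction p using Polynomial.induction_on' with
  | add p q hp hq =>
    simp only [Polynomial.eval_add, add_mul]
    rw [integral_add (integrableOn_mul_continuous hφ p.continuous)
      (integrableOn_mul_continuous hφ q.continuous),
      hp, hq, add_zero]
  | monomial n a =>
    have hn := hX n 0
    simp only [chebU_zero, mul_one] at hn
    simp only [Polynomial.eval_monomial, mul_assoc, integral_const_mul, hn, mul_zero]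

/-- A function in `L²` for the weight `√(1 - x²)` is determined by its coefficients. -/
lemma ae_eq_of_fourierChebU_eq {f g : ℝ → ℝ} (hmeas : Measurable f)
    (hL2 : IntegrableOn (fun x => f x ^ 2 * √(1 - x ^ 2)) (Ioo (-1 : ℝ) 1))
    (hg : Continuous g) (h : ∀ n, fourierChebU f n = fourierChebU g n) :
    ∀ᵐ x ∂(volume.restrict (Ioo (-1 : ℝ) 1)), f x = g x := by
  have hf' := integrableOn_mul_sqrt_of_sq hmeas hL2
  have hg' : IntegrableOn (fun x => g x * √(1 - x ^ 2)) (Ioo (-1 : ℝ) 1) :=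
    (Continuous.integrableOn_Icc (by fun_prop)).mono_set Ioo_subset_Icc_self
  have hφ : IntegrableOn (fun x => f x * √(1 - x ^ 2) - g x * √(1 - x ^ 2)) (Ioo (-1 : ℝ) 1) :=
    hf'.sub hg'
  have hcoef : ∀ n, ∫ x in Ioo (-1 : ℝ) 1,
      chebU n x * (f x * √(1 - x ^ 2) - g x * √(1 - x ^ 2)) = 0 := by
    intro n
    have hn := mul_left_cancel₀ (by positivity : (2 / π : ℝ) ≠ 0) (h n)
    simp only [mul_sub]
    rw [integral_sub (integrableOn_mul_continuous hf' (continuous_chebU n))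
      (integrableOn_mul_continuous hg' (continuous_chebU n)), sub_eq_zero]
    convert hn using 3 <;> ring
  have hz := ae_eq_zero_of_forall_integral_mul_polynomial_eq_zero hφ fun p => by
    simpa only [mul_comm] using integral_mul_polynomial_eq_zero_of_chebU hφ hcoef p
  filter_upwards [hz, ae_restrict_mem measurableSet_Ioo] with x hx hxI
  have hpos : 0 < 1 - x ^ 2 := by nlinarith [hxI.1, hxI.2]
  rw [← sub_mul] at hx
  have := (mul_eq_zero.1 hx).resolve_right (Real.sqrt_pos.2 hpos).ne'
  linarith

lemma fourierChebU_tsum {b : ℕ → ℝ} (hb : Summable fun n : ℕ => |b n| * ((n : ℝ) + 1))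
    {g : ℝ → ℝ} (hg : ∀ x ∈ Ioo (-1 : ℝ) 1, g x = ∑' n, b n * chebU n x) (m : ℕ) :
    fourierChebU g m = b m := by
  have hbound : ∀ n, ∀ x ∈ Ioo (-1 : ℝ) 1, ‖b n * chebU n x‖ ≤ |b n| * ((n : ℝ) + 1) := by
    intro n x hx
    rw [norm_mul, Real.norm_eq_abs, Real.norm_eq_abs]
    gcongr
    exact abs_chebU_le (abs_le.2 ⟨hx.1.le, hx.2.le⟩) n
  have hsum : HasSum
      (fun n => ∫ x in Ioo (-1 : ℝ) 1, b n * chebU n x * (chebU m x * √(1 - x ^ 2)))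
      (∫ x in Ioo (-1 : ℝ) 1, g x * (chebU m x * √(1 - x ^ 2))) := by
    refine hasSum_integral_of_dominated_convergence
      (fun n _ => |b n| * ((n : ℝ) + 1) * ((m : ℝ) + 1)) (fun n => ?_) (fun n => ?_)
      (Filter.Eventually.of_forall fun _ => hb.mul_right _) (integrable_const _) ?_
    · have h1 := continuous_chebU n
      have h2 := continuous_chebU m
      exact Continuous.aestronglyMeasurable (by fun_prop)
    · filter_upwards [ae_restrict_mem measurableSet_Ioo] with x hx
      have h1 : √(1 - x ^ 2) ≤ 1 := Real.sqrt_le_one.2 (by nlinarith [sq_nonneg x])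
      have h2 := abs_chebU_le (abs_le.2 ⟨hx.1.le, hx.2.le⟩) m
      rw [norm_mul, norm_mul (chebU m x), Real.norm_of_nonneg (Real.sqrt_nonneg _)]
      refine mul_le_mul (hbound n x hx) ?_ (by positivity) (by positivity)
      calc _ ≤ ((m : ℝ) + 1) * 1 := by gcongr; exact h2
        _ = _ := mul_one _
    · filter_upwards [ae_restrict_mem measurableSet_Ioo] with x hx
      rw [hg x hx]
      exact (Summable.of_norm_bounded hb fun n => hbound n x hx).hasSum.mul_right _
  have hsum' := hsum.mul_left (2 / π)
  have hterm : ∀ n, 2 / π * ∫ x in Ioo (-1 : ℝ) 1, b n * chebU n x * (chebU m x * √(1 - x ^ 2)) =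
      if n = m then b m else 0 := by
    intro n
    have h1 := fourierChebU_chebU n m
    rw [fourierChebU] at h1
    simp only [mul_assoc, integral_const_mul] at h1 ⊢
    rw [mul_left_comm, h1]
    split_ifs with hnm
    · rw [hnm, mul_one]
    · rw [mul_zero]
  simp only [hterm] at hsum'
  have h2 := hsum'.unique (hasSum_ite_eq m (b m))
  rw [fourierChebU, ← h2]
  simp only [mul_assoc]

/-- `U^∞ = C^∞([-1,1])`: a function in `L²_ω` has rapidly decaying second-kind
Chebyshev coefficients iff it coincides a.e. on `(-1,1)` with a smooth function
on `ℝ`. -/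
theorem Uinfty_eq_Cinfty (f : ℝ → ℝ) (hmeas : Measurable f)
    (hL2 : IntegrableOn (fun x => f x ^ 2 * Real.sqrt (1 - x ^ 2)) (Ioo (-1 : ℝ) 1)) :
    (∀ s : ℕ, Summable (fun n : ℕ => (1 + ((n : ℝ) + 1) ^ 2) ^ s * fourierChebU f n ^ 2)) ↔
    (∃ g : ℝ → ℝ, ContDiff ℝ (⊤ : ℕ∞) g ∧
      ∀ᵐ x ∂(volume.restrict (Ioo (-1 : ℝ) 1)), f x = g x) := by
  constructor
  · intro h
    have hb := summable_abs_mul_pow_of_summable_sq h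
    have hsmooth := contDiff_tsum_mul_chebUExt hb
    refine ⟨_, hsmooth, ae_eq_of_fourierChebU_eq hmeas hL2 hsmooth.continuous fun n => ?_⟩
    refine (fourierChebU_tsum (by simpa using hb 1) (fun x hx => ?_) n).symm
    exact tsum_congr fun k => by rw [chebUExt_eq_chebU k (Ioo_subset_Icc_self hx)]
  · rintro ⟨g, hg, hfg⟩ s
    simp only [fourierChebU_congr_ae hfg]
    exact summable_fourierChebU_of_contDiff hg s
end
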